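/- Let δ>0 and let 0<s<r<1. Then ∫₀^∞ ∫₀^∞ a·b · p^δ_s(0,a) · p^δ_{r−s}(a,b) · (1−r)^{−δ/2} exp(−b²/(2(1−r))) da db = 2·(Γ((δ+1)/2)²/Γ(δ/2)²) · (r−s)^{δ/2+1} (s(1−r))^{1/2} (r(1−s))^{−(δ+1)/2} · ₂F₁((δ+1)/2,(δ+1)/2,δ/2, s(1−r)/(r(1−s))). (The left-hand side is the second moment E^δ[X_s X_r] of a δ-dimensional Bessel bridge from 0 to 0 over [0,1].) -/

import Mathlib

open MeasureTheory Real Filter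

/-- Ascending Pochhammer symbol `(a)_k = a(a+1)⋯(a+k-1)`. -/
noncomputable def poch (a : ℝ) (k : ℕ) : ℝ := ∏ i ∈ Finset.range k, (a + i)

/-- Gauss hypergeometric function `₂F₁(a,b,c,z) = ∑ (a)_k (b)_k / (k! (c)_k) z^k`. -/
noncomputable def hyp2F1 (a b c z : ℝ) : ℝ :=
  ∑' k : ℕ, (poch a k * poch b k) / ((Nat.factorial k : ℝ) * poch c k) * z ^ k

/-- `K(δ) = 2 Γ((δ+1)/2)² / Γ(δ/2)²`. -/
noncomputable def Kcoef (δ : ℝ) : ℝ :=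
  2 * Real.Gamma ((δ + 1) / 2) ^ 2 / Real.Gamma (δ / 2) ^ 2

/-- Two-point kernel `G_δ(s,r)`, equal to the second moment `E^δ[X_s X_r]` of a
δ-dimensional Bessel bridge from 0 to 0 over [0,1]. -/
noncomputable def twoPt (δ s r : ℝ) : ℝ :=
  if s < r then
    Kcoef δ * (r - s) ^ (δ / 2 + 1) * (s * (1 - r)) ^ ((1 : ℝ) / 2) *
      (r * (1 - s)) ^ (-((δ + 1) / 2)) *
      hyp2F1 ((δ + 1) / 2) ((δ + 1) / 2) (δ / 2) (s * (1 - r) / (r * (1 - s)))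
  else
    Kcoef δ * (s - r) ^ (δ / 2 + 1) * (r * (1 - s)) ^ ((1 : ℝ) / 2) *
      (s * (1 - r)) ^ (-((δ + 1) / 2)) *
      hyp2F1 ((δ + 1) / 2) ((δ + 1) / 2) (δ / 2) (r * (1 - s) / (s * (1 - r)))

/-- Coefficient `D(s,r)`. -/
noncomputable def Dcoef (s r : ℝ) : ℝ :=
  if s < r then (1 - s) / ((r - s) * (1 - r)) else s / (r * (s - r))

/-- Coefficient `C_k = Γ(k+(δ+1)/2)/(Γ(δ/2) Γ(k+δ/2) k!)`. -/
noncomputable def Ccoef (δ : ℝ) (k : ℕ) : ℝ :=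
  Real.Gamma ((k : ℝ) + (δ + 1) / 2) /
    (Real.Gamma (δ / 2) * Real.Gamma ((k : ℝ) + δ / 2) * (Nat.factorial k : ℝ))

/-- Coefficient `f_k(s,r)`. -/
noncomputable def fcoef (s r : ℝ) (k : ℕ) : ℝ :=
  if s < r then (2 * (r - s)) ^ ((1 : ℝ) / 2 - (k : ℝ)) * (s / r) ^ ((k : ℝ) + 1 / 2)
  else (2 * (s - r)) ^ ((1 : ℝ) / 2 - (k : ℝ)) * ((1 - s) / (1 - r)) ^ ((k : ℝ) + 1 / 2)

/-- `Σ^δ_{r,s}(b) = Σ^δ_r(X_s | b)`, the density-weighted conditional expectation of a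
δ-dimensional Bessel bridge. -/
noncomputable def SigmaRS (δ r s b : ℝ) : ℝ :=
  ((2 : ℝ) ^ (δ / 2 - 1) * (r * (1 - r)) ^ (δ / 2))⁻¹ *
    Real.exp (-(Dcoef s r) * b ^ 2 / 2) *
    ∑' k : ℕ, Ccoef δ k * fcoef s r k * b ^ (2 * k)

/-- Transition density of the δ-dimensional Bessel process started at 0:
`p^δ_t(0,a) = a^{δ-1}/(2^{δ/2-1} t^{δ/2} Γ(δ/2)) exp(-a²/(2t))`. -/
noncomputable def pFrom0 (δ t a : ℝ) : ℝ :=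
  a ^ (δ - 1) / ((2 : ℝ) ^ (δ / 2 - 1) * t ^ (δ / 2) * Real.Gamma (δ / 2)) *
    Real.exp (-a ^ 2 / (2 * t))

/-- Transition density of the δ-dimensional Bessel process:
`p^δ_t(a,b) = (b/t)(b/a)^{δ/2-1} exp(-(a²+b²)/(2t)) ∑ (ab/(2t))^{2k+δ/2-1}/(k! Γ(k+δ/2))`. -/
noncomputable def pTrans (δ t a b : ℝ) : ℝ :=
  (b / t) * (b / a) ^ (δ / 2 - 1) * Real.exp (-(a ^ 2 + b ^ 2) / (2 * t)) *
    ∑' k : ℕ, (a * b / (2 * t)) ^ (2 * (k : ℝ) + δ / 2 - 1) /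
      ((Nat.factorial k : ℝ) * Real.Gamma ((k : ℝ) + δ / 2))

/-!
Up to constants, powers and Gaussian factors, the transition density is `₀F₁(δ/2; (ab/2t)²)`. Since
`∫₀^∞ x^(2α-1) exp(-A x²) x^(2k) dx = (Γ(α) / (2 A^α)) (α)_k A^(-k)`, integrating a power
series in `x²` against `x^(2α-1) exp(-A x²)` inserts a Pochhammer factor `(α)_k` and rescales the
argument by `A⁻¹`. The integrals over `a` and `b`, both with `α = (δ+1)/2`, thus turn `₀F₁` first
into `₁F₁` and then into `₂F₁`.
-/

/-- The confluent hypergeometric limit function `₀F₁(c; z)`, carrying the Bessel-function part of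
the transition density `pTrans`. As in `hyp2F1`, a nonpositive integer `c` gives zero coefficients
from some point on, because `poch c k` then vanishes and division by zero gives `0`. -/
noncomputable def hyp0F1 (c z : ℝ) : ℝ :=
  ∑' k : ℕ, 1 / ((Nat.factorial k : ℝ) * poch c k) * z ^ k

/-- Kummer's confluent hypergeometric function `₁F₁(a; c; z)`, which arises from `hyp0F1` by
integrating out one variable; same convention as there for nonpositive integers `c`. -/
noncomputable def hyp1F1 (a c z : ℝ) : ℝ :=
  ∑' k : ℕ, poch a k / ((Nat.factorial k : ℝ) * poch c k) * z ^ k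

lemma poch_succ (a : ℝ) (k : ℕ) : poch a (k + 1) = poch a k * (a + k) :=
  Finset.prod_range_succ _ _

lemma Gamma_add_natCast {a : ℝ} (ha : ∀ m : ℕ, a ≠ -m) (k : ℕ) :
    Gamma (a + k) = poch a k * Gamma a := by
  induction k with
  | zero => simp [poch]
  | succ k ih =>
    have hak : a + k ≠ 0 := fun h => ha k (eq_neg_of_add_eq_zero_left h)
    rw [Nat.cast_succ, ← add_assoc, Gamma_add_one hak, ih, poch_succ]
    ring

lemma ne_neg_natCast_of_pos {a : ℝ} (ha : 0 < a) (m : ℕ) : a ≠ -m :=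
  ((neg_nonpos.mpr m.cast_nonneg).trans_lt ha).ne'

lemma summable_of_succ_eq_mul {f q : ℕ → ℝ} {l : ℝ} (hl : |l| < 1)
    (hf : ∀ k, f (k + 1) = q k * f k) (hq : Tendsto q atTop (nhds l)) : Summable f := by
  obtain ⟨ρ, hlρ, hρ⟩ := exists_between hl
  refine summable_of_ratio_norm_eventually_le hρ ?_
  filter_upwards [hq.abs.eventually_lt_const hlρ] with k hk
  rw [hf, norm_mul, norm_eq_abs (q k)]
  gcongr

lemma tendsto_add_natCast_div_add_natCast (a b : ℝ) :
    Tendsto (fun k : ℕ => (a + k) / (b + k)) atTop (nhds 1) := by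
  simpa using tendsto_add_mul_div_add_mul_atTop_nhds a b 1 one_ne_zero

lemma summable_hyp1F1 (a c z : ℝ) :
    Summable fun k : ℕ => poch a k / ((Nat.factorial k : ℝ) * poch c k) * z ^ k := by
  refine summable_of_succ_eq_mul (l := 0) (q := fun k => (a + k) / (c + k) * (z / (k + 1)))
    (by simp) (fun k => ?_) ?_
  · rw [poch_succ, poch_succ, Nat.factorial_succ]
    push_cast
    simp only [div_eq_mul_inv, mul_inv]
    ring
  · simpa [div_eq_mul_inv] using (tendsto_add_natCast_div_add_natCast a c).mul
      (tendsto_one_div_add_atTop_nhds_zero_nat.const_mul z)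

lemma summable_hyp2F1 (a b c : ℝ) {z : ℝ} (hz : |z| < 1) :
    Summable fun k : ℕ =>
      poch a k * poch b k / ((Nat.factorial k : ℝ) * poch c k) * z ^ k := by
  refine summable_of_succ_eq_mul (l := z)
    (q := fun k => (a + k) / (c + k) * ((b + k) / (1 + k)) * z) hz (fun k => ?_) ?_
  · rw [poch_succ, poch_succ, poch_succ, Nat.factorial_succ]
    push_cast
    simp only [div_eq_mul_inv, mul_inv]
    ring
  · simpa using ((tendsto_add_natCast_div_add_natCast a c).mul
      (tendsto_add_natCast_div_add_natCast b 1)).mul_const z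

section GaussianIntegrals

variable {α β A B : ℝ}

lemma rpow_mul_exp_mul_sq_pow (k : ℕ) {x : ℝ} (hx : 0 < x) :
    x ^ (2 * α - 1) * exp (-A * x ^ 2) * (x ^ 2) ^ k =
      x ^ (2 * (α + k) - 1) * exp (-A * x ^ 2) := by
  have hpow : x ^ (2 * (α + k) - 1) = x ^ (2 * α - 1) * (x ^ 2) ^ k := by
    rw [← pow_mul, ← rpow_add_natCast hx.ne']
    congr 1
    push_cast
    ring
  rw [hpow]
  ring

lemma integrableOn_rpow_mul_exp_mul_sq_pow (hα : 0 < α) (hA : 0 < A) (k : ℕ) :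
    IntegrableOn (fun x : ℝ => x ^ (2 * α - 1) * exp (-A * x ^ 2) * (x ^ 2) ^ k)
      (Set.Ioi 0) := by
  have hexp : -1 < 2 * (α + k) - 1 := by linarith [k.cast_nonneg (α := ℝ)]
  exact (integrableOn_rpow_mul_exp_neg_mul_sq hA hexp).congr_fun
    (fun x hx => (rpow_mul_exp_mul_sq_pow k hx).symm) measurableSet_Ioi

lemma integral_rpow_mul_exp_mul_sq_pow (hα : 0 < α) (hA : 0 < A) (k : ℕ) :
    ∫ x in Set.Ioi (0 : ℝ), x ^ (2 * α - 1) * exp (-A * x ^ 2) * (x ^ 2) ^ k =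
      Gamma α / (2 * A ^ α) * (poch α k * A⁻¹ ^ k) := by
  have hexp : -1 < 2 * (α + k) - 1 := by linarith [k.cast_nonneg (α := ℝ)]
  have hmoment := integral_rpow_mul_exp_neg_mul_rpow two_pos hexp hA
  simp only [rpow_two, sub_add_cancel, neg_div, mul_div_cancel_left₀ _ (two_ne_zero' ℝ)] at hmoment
  rw [setIntegral_congr_fun measurableSet_Ioi fun x hx => rpow_mul_exp_mul_sq_pow k hx, hmoment,
    Gamma_add_natCast (ne_neg_natCast_of_pos hα), rpow_neg hA.le,
    rpow_add_natCast hA.ne']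
  ring

lemma integral_rpow_mul_exp_mul_tsum (hα : 0 < α) (hA : 0 < A) {c : ℕ → ℝ}
    (hc : Summable fun k => c k * (poch α k * A⁻¹ ^ k)) :
    ∫ x in Set.Ioi (0 : ℝ), x ^ (2 * α - 1) * exp (-A * x ^ 2) * ∑' k, c k * (x ^ 2) ^ k =
      Gamma α / (2 * A ^ α) * ∑' k, c k * (poch α k * A⁻¹ ^ k) := by
  set w : ℝ → ℕ → ℝ := fun x k => x ^ (2 * α - 1) * exp (-A * x ^ 2) * (x ^ 2) ^ k
  have hw (k : ℕ) : ∫ x in Set.Ioi (0 : ℝ), w x k = Gamma α / (2 * A ^ α) * (poch α k * A⁻¹ ^ k) :=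
    integral_rpow_mul_exp_mul_sq_pow hα hA k
  have hw_nonneg (k : ℕ) {x : ℝ} (hx : 0 < x) : 0 ≤ w x k := by positivity
  have hnorm (k : ℕ) : ∫ x in Set.Ioi (0 : ℝ), ‖c k * w x k‖ =
      ‖Gamma α / (2 * A ^ α) * (c k * (poch α k * A⁻¹ ^ k))‖ := by
    rw [mul_left_comm, norm_mul, ← hw, norm_of_nonneg
      (setIntegral_nonneg measurableSet_Ioi fun x hx => hw_nonneg k hx), ← integral_const_mul]
    refine setIntegral_congr_fun measurableSet_Ioi fun x hx => ?_
    rw [norm_mul, norm_of_nonneg (hw_nonneg k hx)]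
  have hsum : Summable fun k => ∫ x in Set.Ioi (0 : ℝ), ‖c k * w x k‖ := by
    simpa only [hnorm] using (hc.mul_left _).norm
  calc ∫ x in Set.Ioi (0 : ℝ), x ^ (2 * α - 1) * exp (-A * x ^ 2) * ∑' k, c k * (x ^ 2) ^ k
      = ∫ x in Set.Ioi (0 : ℝ), ∑' k, c k * w x k := by
        simp only [w, mul_left_comm (c _), tsum_mul_left]
    _ = ∑' k, ∫ x in Set.Ioi (0 : ℝ), c k * w x k :=
        (integral_tsum_of_summable_integral_norm
          (fun k => (integrableOn_rpow_mul_exp_mul_sq_pow hα hA k).const_mul _) hsum).symm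
    _ = Gamma α / (2 * A ^ α) * ∑' k, c k * (poch α k * A⁻¹ ^ k) := by
        simp only [integral_const_mul, hw, mul_left_comm (c _), tsum_mul_left]

lemma integral_rpow_mul_exp_mul_hyp0F1 (hα : 0 < α) (hA : 0 < A) (c z : ℝ) :
    ∫ x in Set.Ioi (0 : ℝ), x ^ (2 * α - 1) * exp (-A * x ^ 2) * hyp0F1 c (z * x ^ 2) =
      Gamma α / (2 * A ^ α) * hyp1F1 α c (z / A) := by
  have hterm (k : ℕ) : 1 / ((Nat.factorial k : ℝ) * poch c k) * z ^ k * (poch α k * A⁻¹ ^ k) =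
      poch α k / ((Nat.factorial k : ℝ) * poch c k) * (z / A) ^ k := by ring
  have h := integral_rpow_mul_exp_mul_tsum hα hA
    (c := fun k => 1 / ((Nat.factorial k : ℝ) * poch c k) * z ^ k)
    (by simpa only [hterm] using summable_hyp1F1 α c (z / A))
  simpa only [hterm, hyp0F1, hyp1F1, mul_pow, mul_assoc] using h

lemma integral_rpow_mul_exp_mul_hyp1F1 (hβ : 0 < β) (hB : 0 < B) (a c : ℝ) {z : ℝ}
    (hz : |z| < B) :
    ∫ y in Set.Ioi (0 : ℝ), y ^ (2 * β - 1) * exp (-B * y ^ 2) * hyp1F1 a c (z * y ^ 2) =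
      Gamma β / (2 * B ^ β) * hyp2F1 a β c (z / B) := by
  have hzB : |z / B| < 1 := by rwa [abs_div, abs_of_pos hB, div_lt_one hB]
  have hterm (k : ℕ) : poch a k / ((Nat.factorial k : ℝ) * poch c k) * z ^ k *
      (poch β k * B⁻¹ ^ k) =
      poch a k * poch β k / ((Nat.factorial k : ℝ) * poch c k) * (z / B) ^ k := by ring
  have h := integral_rpow_mul_exp_mul_tsum hβ hB
    (c := fun k => poch a k / ((Nat.factorial k : ℝ) * poch c k) * z ^ k)
    (by simpa only [hterm] using summable_hyp2F1 a β c hzB)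
  simpa only [hterm, hyp1F1, hyp2F1, mul_pow, mul_assoc] using h

theorem integral_integral_rpow_mul_exp_mul_hyp0F1 (hα : 0 < α) (hβ : 0 < β) (hA : 0 < A)
    (hB : 0 < B) (c : ℝ) {z : ℝ} (hz : |z| < A * B) :
    ∫ y in Set.Ioi (0 : ℝ), ∫ x in Set.Ioi (0 : ℝ),
        y ^ (2 * β - 1) * exp (-B * y ^ 2) *
          (x ^ (2 * α - 1) * exp (-A * x ^ 2) * hyp0F1 c (z * y ^ 2 * x ^ 2)) =
      Gamma α * Gamma β / (4 * A ^ α * B ^ β) * hyp2F1 α β c (z / (A * B)) := by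
  have hzA : |z / A| < B := by rwa [abs_div, abs_of_pos hA, div_lt_iff₀' hA]
  have hinner (y : ℝ) : ∫ x in Set.Ioi (0 : ℝ), y ^ (2 * β - 1) * exp (-B * y ^ 2) *
        (x ^ (2 * α - 1) * exp (-A * x ^ 2) * hyp0F1 c (z * y ^ 2 * x ^ 2)) =
      Gamma α / (2 * A ^ α) *
        (y ^ (2 * β - 1) * exp (-B * y ^ 2) * hyp1F1 α c (z / A * y ^ 2)) := by
    rw [integral_const_mul, integral_rpow_mul_exp_mul_hyp0F1 hα hA, mul_div_right_comm z]
    ring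
  simp only [hinner, integral_const_mul]
  rw [integral_rpow_mul_exp_mul_hyp1F1 hβ hB α c hzA, div_div]
  ring

end GaussianIntegrals

section BesselProcess

variable {δ s r t a b : ℝ}

lemma pFrom0_eq (ht : 0 < t) :
    pFrom0 δ t a = 2 * a ^ (δ - 1) / ((2 * t) ^ (δ / 2) * Gamma (δ / 2)) *
      exp (-a ^ 2 / (2 * t)) := by
  rw [pFrom0, mul_rpow zero_le_two ht.le, rpow_sub_one two_ne_zero]
  field_simp

lemma bessel_prefactor_rpow (ht : 0 < t) (ha : 0 < a) (hb : 0 < b) :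
    b / t * (b / a) ^ (δ / 2 - 1) * (a * b / (2 * t)) ^ (δ / 2 - 1) =
      2 * b ^ (δ - 1) / (2 * t) ^ (δ / 2) := by
  have hbase : b / a * (a * b / (2 * t)) = b ^ 2 / (2 * t) := by field_simp
  have hb_pow : (b ^ 2) ^ (δ / 2 - 1) = b ^ (δ - 1) / b := by
    rw [← rpow_natCast_mul hb.le, ← rpow_sub_one hb.ne']
    congr 1
    push_cast
    ring
  rw [mul_assoc, ← mul_rpow (by positivity) (by positivity), hbase,
    div_rpow (by positivity) (by positivity), hb_pow, rpow_sub_one (by positivity : 2 * t ≠ 0)]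
  field_simp

lemma pTrans_eq_hyp0F1 (hδ : ∀ m : ℕ, δ / 2 ≠ -m) (ht : 0 < t) (ha : 0 < a) (hb : 0 < b) :
    pTrans δ t a b = 2 * b ^ (δ - 1) / ((2 * t) ^ (δ / 2) * Gamma (δ / 2)) *
      exp (-(a ^ 2 + b ^ 2) / (2 * t)) * hyp0F1 (δ / 2) ((a * b / (2 * t)) ^ 2) := by
  have hpre := bessel_prefactor_rpow (δ := δ) ht ha hb
  simp only [pTrans, hyp0F1]
  have hu : 0 < a * b / (2 * t) := by positivity
  set u := a * b / (2 * t)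
  have hterm (k : ℕ) : u ^ (2 * (k : ℝ) + δ / 2 - 1) /
        ((Nat.factorial k : ℝ) * Gamma (k + δ / 2)) =
      u ^ (δ / 2 - 1) / Gamma (δ / 2) *
        (1 / ((Nat.factorial k : ℝ) * poch (δ / 2) k) * (u ^ 2) ^ k) := by
    have hexp : 2 * (k : ℝ) + δ / 2 - 1 = δ / 2 - 1 + (2 * k : ℕ) := by push_cast; ring
    rw [hexp, rpow_add_natCast hu.ne', pow_mul, add_comm (k : ℝ), Gamma_add_natCast hδ]
    ring
  simp only [hterm, tsum_mul_left]
  rw [← div_div (2 * b ^ (δ - 1)), ← hpre]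
  ring

/-- The last factor on the left is the limit of `p_{1-r}(b,c) / p_1(0,c)` as `c → 0`, so that the
left-hand side is the joint density of `(X_s, X_r)` for the bridge from `0` to `0`. -/
lemma bessel_bridge_density_eq_hyp0F1 (hδ : ∀ m : ℕ, δ / 2 ≠ -m) (hs : 0 < s) (hsr : s < r)
    (hr : r < 1) (ha : 0 < a) (hb : 0 < b) :
    pFrom0 δ s a * pTrans δ (r - s) a b *
        ((1 - r) ^ (-(δ / 2)) * exp (-b ^ 2 / (2 * (1 - r)))) =
      4 / ((4 * s * (r - s) * (1 - r)) ^ (δ / 2) * Gamma (δ / 2) ^ 2) *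
        (b ^ (δ - 1) * exp (-((1 - s) / (2 * (r - s) * (1 - r))) * b ^ 2) *
          (a ^ (δ - 1) * exp (-(r / (2 * s * (r - s))) * a ^ 2) *
            hyp0F1 (δ / 2) (1 / (2 * (r - s)) ^ 2 * b ^ 2 * a ^ 2))) := by
  have hrs : 0 < r - s := sub_pos.mpr hsr
  have hr' : 0 < 1 - r := sub_pos.mpr hr
  have hexp : exp (-((1 - s) / (2 * (r - s) * (1 - r))) * b ^ 2) *
        exp (-(r / (2 * s * (r - s))) * a ^ 2) =
      exp (-a ^ 2 / (2 * s)) * exp (-(a ^ 2 + b ^ 2) / (2 * (r - s))) *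
        exp (-b ^ 2 / (2 * (1 - r))) := by
    simp only [← exp_add]
    congr 1
    field_simp
    ring
  have harg : 1 / (2 * (r - s)) ^ 2 * b ^ 2 * a ^ 2 = (a * b / (2 * (r - s))) ^ 2 := by field_simp
  have hconst : (4 * s * (r - s) * (1 - r)) ^ (δ / 2) =
      (2 * s) ^ (δ / 2) * (2 * (r - s)) ^ (δ / 2) * (1 - r) ^ (δ / 2) := by
    rw [← mul_rpow (by positivity) (by positivity), ← mul_rpow (by positivity) hr'.le]
    congr 1
    ring
  rw [pFrom0_eq hs, pTrans_eq_hyp0F1 hδ hrs ha hb, harg, hconst, rpow_neg hr'.le]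
  linear_combination (-4 / ((2 * s) ^ (δ / 2) * (2 * (r - s)) ^ (δ / 2) *
    (1 - r) ^ (δ / 2) * Gamma (δ / 2) ^ 2) * a ^ (δ - 1) * b ^ (δ - 1) *
    hyp0F1 (δ / 2) ((a * b / (2 * (r - s))) ^ 2)) * hexp

theorem bessel_bridge_moment {p q : ℝ} (hδ : ∀ m : ℕ, δ / 2 ≠ -m) (hp : 0 < δ + p)
    (hq : 0 < δ + q) (hs : 0 < s) (hsr : s < r) (hr : r < 1) :
    ∫ b in Set.Ioi (0 : ℝ), ∫ a in Set.Ioi (0 : ℝ),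
        a ^ p * b ^ q * (pFrom0 δ s a * pTrans δ (r - s) a b *
          ((1 - r) ^ (-(δ / 2)) * exp (-b ^ 2 / (2 * (1 - r))))) =
      4 / ((4 * s * (r - s) * (1 - r)) ^ (δ / 2) * Gamma (δ / 2) ^ 2) *
        (Gamma ((δ + p) / 2) * Gamma ((δ + q) / 2) /
          (4 * (r / (2 * s * (r - s))) ^ ((δ + p) / 2) *
            ((1 - s) / (2 * (r - s) * (1 - r))) ^ ((δ + q) / 2)) *
          hyp2F1 ((δ + p) / 2) ((δ + q) / 2) (δ / 2) (s * (1 - r) / (r * (1 - s)))) := by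
  have hrs : 0 < r - s := sub_pos.mpr hsr
  have hr' : 0 < 1 - r := sub_pos.mpr hr
  have hr0 : 0 < r := hs.trans hsr
  have hs' : 0 < 1 - s := sub_pos.mpr (hsr.trans hr)
  set A := r / (2 * s * (r - s)) with hA_def
  set B := (1 - s) / (2 * (r - s) * (1 - r)) with hB_def
  have hA : 0 < A := by positivity
  have hB : 0 < B := by positivity
  have harg : 1 / (2 * (r - s)) ^ 2 / (A * B) = s * (1 - r) / (r * (1 - s)) := by
    rw [hA_def, hB_def]
    field_simp
  have hz : |1 / (2 * (r - s)) ^ 2| < A * B := by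
    rw [abs_of_pos (by positivity), ← div_lt_one (by positivity), harg,
      div_lt_one (by positivity)]
    linarith
  rw [← harg, ← integral_integral_rpow_mul_exp_mul_hyp0F1 (half_pos hp) (half_pos hq) hA hB _ hz,
    ← integral_const_mul]
  refine setIntegral_congr_fun measurableSet_Ioi fun b (hb : 0 < b) => ?_
  rw [← integral_const_mul]
  refine setIntegral_congr_fun measurableSet_Ioi fun a (ha : 0 < a) => ?_
  have hpow {x : ℝ} (hx : 0 < x) (u : ℝ) : x ^ (2 * ((δ + u) / 2) - 1) = x ^ u * x ^ (δ - 1) := by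
    rw [← rpow_add hx]
    congr 1
    ring
  rw [bessel_bridge_density_eq_hyp0F1 hδ hs hsr hr ha hb, hpow ha, hpow hb]
  ring

end BesselProcess

lemma inv_rpow_mul_rpow_add_half {d x y : ℝ} (hd : 0 < d) (hx : 0 < x) (hy : 0 < y) (ν : ℝ) :
    ((4 * d * x) ^ ν * (y / (4 * d ^ 2 * x)) ^ (ν + 1 / 2))⁻¹ =
      2 * d ^ (ν + 1) * x ^ ((1 : ℝ) / 2) * y ^ (-(ν + 1 / 2)) := by
  have hfactor : 4 * d ^ 2 * x = 4 * d * x * d := by ring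
  have hd_pow : d ^ (ν + 1) = d ^ (ν + 1 / 2) * d ^ ((1 : ℝ) / 2) := by
    rw [← rpow_add hd]
    congr 1
    ring
  have hsqrt : (4 * d * x) ^ ((1 : ℝ) / 2) = 2 * d ^ ((1 : ℝ) / 2) * x ^ ((1 : ℝ) / 2) := by
    rw [mul_rpow (by positivity) hx.le, mul_rpow (by positivity) hd.le]
    norm_num [← sqrt_eq_rpow]
  rw [hfactor, div_rpow hy.le (by positivity), mul_rpow (by positivity) hd.le,
    rpow_add (by positivity : 0 < 4 * d * x), hsqrt, hd_pow, rpow_neg hy.le]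
  field_simp

lemma inv_second_moment_const (δ : ℝ) {s r : ℝ} (hs : 0 < s) (hsr : s < r) (hr : r < 1) :
    ((4 * s * (r - s) * (1 - r)) ^ (δ / 2) * ((r / (2 * s * (r - s))) ^ ((δ + 1) / 2) *
        ((1 - s) / (2 * (r - s) * (1 - r))) ^ ((δ + 1) / 2)))⁻¹ =
      2 * (r - s) ^ (δ / 2 + 1) * (s * (1 - r)) ^ ((1 : ℝ) / 2) *
        (r * (1 - s)) ^ (-((δ + 1) / 2)) := by
  have hrs : 0 < r - s := sub_pos.mpr hsr
  have hr' : 0 < 1 - r := sub_pos.mpr hr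
  have hr0 : 0 < r := hs.trans hsr
  have hs' : 0 < 1 - s := sub_pos.mpr (hsr.trans hr)
  have hbase : 4 * s * (r - s) * (1 - r) = 4 * (r - s) * (s * (1 - r)) := by ring
  have hAB : r / (2 * s * (r - s)) * ((1 - s) / (2 * (r - s) * (1 - r))) =
      r * (1 - s) / (4 * (r - s) ^ 2 * (s * (1 - r))) := by
    field_simp
    norm_num
  rw [← mul_rpow (by positivity) (by positivity), hbase, hAB, add_div,
    inv_rpow_mul_rpow_add_half hrs (mul_pos hs hr') (mul_pos hr0 hs')]

theorem bessel_bridge_second_moment_general {δ s r : ℝ} (hδ : -1 < δ) (hδ0 : δ ≠ 0)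
    (hs : 0 < s) (hsr : s < r) (hr : r < 1) :
    (∫ b in Set.Ioi (0 : ℝ), ∫ a in Set.Ioi (0 : ℝ),
        a * b * pFrom0 δ s a * pTrans δ (r - s) a b *
          ((1 - r) ^ (-(δ / 2)) * Real.exp (-b ^ 2 / (2 * (1 - r)))))
    = 2 * (Real.Gamma ((δ + 1) / 2) ^ 2 / Real.Gamma (δ / 2) ^ 2) *
        (r - s) ^ (δ / 2 + 1) * (s * (1 - r)) ^ ((1 : ℝ) / 2) *
        (r * (1 - s)) ^ (-((δ + 1) / 2)) *
        hyp2F1 ((δ + 1) / 2) ((δ + 1) / 2) (δ / 2) (s * (1 - r) / (r * (1 - s))) := by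
  have hδ2 (m : ℕ) : δ / 2 ≠ -m := by
    rcases m with _ | m
    · simpa using hδ0
    · push_cast
      linarith [m.cast_nonneg (α := ℝ)]
  have hα : 0 < δ + 1 := neg_lt_iff_pos_add.mp hδ
  have hconst := inv_second_moment_const δ hs hsr hr
  have hmoment := bessel_bridge_moment hδ2 hα hα hs hsr hr
  simp only [rpow_one, ← mul_assoc] at hmoment ⊢
  rw [hmoment]
  linear_combination Gamma ((δ + 1) / 2) ^ 2 / Gamma (δ / 2) ^ 2 *
    hyp2F1 ((δ + 1) / 2) ((δ + 1) / 2) (δ / 2) (s * (1 - r) / (r * (1 - s))) * hconst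

theorem bessel_bridge_second_moment (δ : ℝ) (hδ : 0 < δ) (s r : ℝ)
    (hs : 0 < s) (hsr : s < r) (hr : r < 1) :
    (∫ b in Set.Ioi (0 : ℝ), ∫ a in Set.Ioi (0 : ℝ),
        a * b * pFrom0 δ s a * pTrans δ (r - s) a b *
          ((1 - r) ^ (-(δ / 2)) * Real.exp (-b ^ 2 / (2 * (1 - r)))))
    = 2 * (Real.Gamma ((δ + 1) / 2) ^ 2 / Real.Gamma (δ / 2) ^ 2) *
        (r - s) ^ (δ / 2 + 1) * (s * (1 - r)) ^ ((1 : ℝ) / 2) *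
        (r * (1 - s)) ^ (-((δ + 1) / 2)) *
        hyp2F1 ((δ + 1) / 2) ((δ + 1) / 2) (δ / 2) (s * (1 - r) / (r * (1 - s))) :=
  bessel_bridge_second_moment_general (neg_one_lt_zero.trans hδ) hδ.ne' hs hsr hr
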